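/- Suppose the initial datum Q_init satisfies Assumption (A2). Then there exists a unique classical solution (Q, Ñ) of the relaxed system, and it is global in time, i.e. it exists on the whole time interval [0,∞). -/

import Mathlib

open Real Set MeasureTheory Filter Topology
open scoped ENNReal

noncomputable section

/-- The time interval `[0, T)` in `ℝ`, where `T : ℝ≥0∞` may be `∞`. -/
def Ico0 (T : ℝ≥0∞) : Set ℝ := {τ : ℝ | 0 ≤ τ ∧ ENNReal.ofReal τ < T}

/-- Partial derivative in the time variable (one-sided at `τ = 0`). -/
def pdTau (Q : ℝ → ℝ → ℝ) (τ η : ℝ) : ℝ := derivWithin (fun s => Q s η) (Ici 0) τ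

/-- Partial derivative in the spatial variable (one-sided at `η = 0` and `η = 1`). -/
def pdEta (Q : ℝ → ℝ → ℝ) (τ η : ℝ) : ℝ := derivWithin (fun x => Q τ x) (Icc 0 1) η

/-- Assumption 1.1: `K ∈ C²(ℝ)` with `K'`, `K''` bounded on `ℝ` and `K > 0` on `[0, Φ_F]`. -/
structure KAssump (K : ℝ → ℝ) (ΦF : ℝ) : Prop where
  smooth : ContDiff ℝ 2 K
  bdd1 : ∃ C : ℝ, ∀ x : ℝ, |deriv K x| ≤ C
  bdd2 : ∃ C : ℝ, ∀ x : ℝ, |deriv (deriv K) x| ≤ C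
  pos : ∀ φ ∈ Icc (0 : ℝ) ΦF, 0 < K φ

/-- `k_min := K'(0) + ∫₀^{Φ_F} min(K''(φ), 0) dφ`. -/
def kmin (K : ℝ → ℝ) (ΦF : ℝ) : ℝ :=
  deriv K 0 + ∫ φ in (0 : ℝ)..ΦF, min (deriv (deriv K) φ) 0

/-- `k_max := K'(0) + ∫₀^{Φ_F} max(K''(φ), 0) dφ`. -/
def kmax (K : ℝ → ℝ) (ΦF : ℝ) : ℝ :=
  deriv K 0 + ∫ φ in (0 : ℝ)..ΦF, max (deriv (deriv K) φ) 0

/-- Assumption (A2) on the initial datum. -/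
structure A2 (K : ℝ → ℝ) (ΦF : ℝ) (Qinit : ℝ → ℝ) : Prop where
  reg : ContDiffOn ℝ 1 Qinit (Icc 0 1)
  mono : MonotoneOn Qinit (Icc 0 1)
  init0 : Qinit 0 = 0
  init1 : Qinit 1 = ΦF
  deriv1 : K ΦF < derivWithin Qinit (Icc 0 1) 1
  compat : derivWithin Qinit (Icc 0 1) 1 - derivWithin Qinit (Icc 0 1) 0 = K ΦF - K 0

/-- A classical solution `(Q, N)` of the Q-system on `[0, T)` with initial datum `Qinit`. -/
structure IsQSol (K : ℝ → ℝ) (ΦF : ℝ) (T : ℝ≥0∞) (Qinit : ℝ → ℝ)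
    (Q : ℝ → ℝ → ℝ) (N : ℝ → ℝ) : Prop where
  initReg : ContDiffOn ℝ 1 Qinit (Icc 0 1)
  initMono : MonotoneOn Qinit (Icc 0 1)
  init0 : Qinit 0 = 0
  init1 : Qinit 1 = ΦF
  initDeriv : K ΦF < derivWithin Qinit (Icc 0 1) 1
  reg : ContDiffOn ℝ 1 (Function.uncurry Q) (Ico0 T ×ˢ Icc (0 : ℝ) 1)
  mono : ∀ τ ∈ Ico0 T, MonotoneOn (Q τ) (Icc 0 1)
  Ncont : ContinuousOn N (Ico0 T)
  Npos : ∀ τ ∈ Ico0 T, 0 < N τ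
  pde : ∀ τ ∈ Ico0 T, ∀ η ∈ Ioo (0 : ℝ) 1,
    pdTau Q τ η + pdEta Q τ η = 1 / N τ + K (Q τ η)
  bc : ∀ τ ∈ Ico0 T, Q τ 0 = 0
  Ndef : ∀ τ ∈ Ico0 T, 1 / N τ = pdEta Q τ 1 - K ΦF
  init : ∀ η ∈ Icc (0 : ℝ) 1, Q 0 η = Qinit η
  constraint : ∀ τ ∈ Ico0 T, K ΦF < pdEta Q τ 1

/-- A classical solution `(Q, Ñ)` of the relaxed system on `[0, T)` with initial datum `Qinit`,
where `Ñ` is unconstrained in sign. -/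
structure IsRelaxedSol (K : ℝ → ℝ) (ΦF : ℝ) (T : ℝ≥0∞) (Qinit : ℝ → ℝ)
    (Q : ℝ → ℝ → ℝ) (Ntil : ℝ → ℝ) : Prop where
  initReg : ContDiffOn ℝ 1 Qinit (Icc 0 1)
  init0 : Qinit 0 = 0
  init1 : Qinit 1 = ΦF
  reg : ContDiffOn ℝ 1 (Function.uncurry Q) (Ico0 T ×ˢ Icc (0 : ℝ) 1)
  Ncont : ContinuousOn Ntil (Ico0 T)
  pde : ∀ τ ∈ Ico0 T, ∀ η ∈ Ioo (0 : ℝ) 1,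
    pdTau Q τ η + pdEta Q τ η = Ntil τ + K (Q τ η)
  bc : ∀ τ ∈ Ico0 T, Q τ 0 = 0
  Ndef : ∀ τ ∈ Ico0 T, Ntil τ = pdEta Q τ 1 - K ΦF
  init : ∀ η ∈ Icc (0 : ℝ) 1, Q 0 η = Qinit η

/-- A steady state `(Q*, N*)` of the Q-system. -/
def IsSteadyState (K : ℝ → ℝ) (ΦF : ℝ) (Qs : ℝ → ℝ) (Ns : ℝ) : Prop :=
  ContDiffOn ℝ 1 Qs (Icc 0 1) ∧ 0 < Ns ∧
    (∀ η ∈ Icc (0 : ℝ) 1, derivWithin Qs (Icc 0 1) η = K (Qs η) + 1 / Ns) ∧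
    Qs 0 = 0 ∧ Qs 1 = ΦF

/-- `P₀ f := f - ∫₀¹ f`. -/
def P0 (f : ℝ → ℝ) (η : ℝ) : ℝ := f η - ∫ x in (0 : ℝ)..1, f x

/-- `H_init := Q_init' - K ∘ Q_init` (derivative within `[0,1]`). -/
def Hinit (K : ℝ → ℝ) (Qinit : ℝ → ℝ) (η : ℝ) : ℝ :=
  derivWithin Qinit (Icc 0 1) η - K (Qinit η)

/-- Weighted Banach fixed point theorem. -/
theorem wfix {X : Type*} [TopologicalSpace X] (ω : X → ℝ) (hω : Continuous ω)
    (hpos : ∀ x, 0 < ω x) (Γ : (X → ℝ) → (X → ℝ))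
    (hc : ∀ f, Continuous f → Continuous (Γ f)) (B : ℝ)
    (h0 : ∀ x, |Γ (fun _ => 0) x| ≤ B * ω x) (θ : ℝ) (hθ0 : 0 ≤ θ) (hθ1 : θ < 1)
    (hL : ∀ f g : X → ℝ, ∀ C : ℝ, Continuous f → Continuous g → 0 ≤ C →
      (∀ x, |f x - g x| ≤ C * ω x) → ∀ x, |Γ f x - Γ g x| ≤ θ * C * ω x) :
    ∃ f : X → ℝ, Continuous f ∧ ∀ x, Γ f x = f x := by
  have hcu : ∀ u : BoundedContinuousFunction X ℝ, Continuous (fun y => ω y * u y) :=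
    fun u => hω.mul u.continuous
  have hcont : ∀ u : BoundedContinuousFunction X ℝ,
      Continuous (fun x => Γ (fun y => ω y * u y) x / ω x) := fun u =>
    (hc _ (hcu u)).div hω (fun x => (hpos x).ne')
  have key : ∀ u v : BoundedContinuousFunction X ℝ, ∀ x,
      |Γ (fun y => ω y * u y) x / ω x - Γ (fun y => ω y * v y) x / ω x| ≤ θ * dist u v := by
    intro u v x
    have := hL _ _ (dist u v) (hcu u) (hcu v) dist_nonneg (fun y => by
      rw [← mul_sub, abs_mul, abs_of_pos (hpos y), mul_comm]
      exact mul_le_mul_of_nonneg_right (by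
        have := BoundedContinuousFunction.dist_coe_le_dist (f := u) (g := v) y
        rwa [Real.dist_eq] at this) (hpos y).le) x
    rw [← sub_div, abs_div, abs_of_pos (hpos x), div_le_iff₀ (hpos x)]
    exact this
  have hbd : ∀ u : BoundedContinuousFunction X ℝ, ∀ x,
      ‖Γ (fun y => ω y * u y) x / ω x‖ ≤ B + θ * dist u 0 := by
    intro u x
    have h1 := key u 0 x
    have h2 := h0 x
    have e : (fun y => ω y * (0 : BoundedContinuousFunction X ℝ) y) = fun _ => (0 : ℝ) := by
      ext y; simp
    rw [e] at h1
    have h3 : |Γ (fun _ => 0) x / ω x| ≤ B := by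
      rw [abs_div, abs_of_pos (hpos x), div_le_iff₀ (hpos x)]; exact h2
    rw [Real.norm_eq_abs]
    have := abs_sub_abs_le_abs_sub (Γ (fun y => ω y * u y) x / ω x) (Γ (fun _ => 0) x / ω x)
    linarith
  let G : BoundedContinuousFunction X ℝ → BoundedContinuousFunction X ℝ := fun u =>
    BoundedContinuousFunction.ofNormedAddCommGroup _ (hcont u) _ (hbd u)
  have hG : ContractingWith ⟨θ, hθ0⟩ G := by
    refine ⟨by exact_mod_cast hθ1, LipschitzWith.of_dist_le_mul fun u v => ?_⟩
    rw [BoundedContinuousFunction.dist_le (by positivity)]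
    intro x
    rw [Real.dist_eq]
    exact key u v x
  have hfp := hG.fixedPoint_isFixedPt
  set u := hG.fixedPoint with hu
  refine ⟨fun y => ω y * u y, hcu u, fun x => ?_⟩
  have h1 : (G u) x = u x := by rw [hfp]
  have h2 : Γ (fun y => ω y * u y) x / ω x = u x := h1
  rw [div_eq_iff (hpos x).ne'] at h2
  rw [h2, mul_comm]

theorem cont_int {X : Type*} [TopologicalSpace X]
    (F : X → ℝ → ℝ) (hF : Continuous (Function.uncurry F)) (a b : X → ℝ)
    (ha : Continuous a) (hb : Continuous b) : Continuous (fun x => ∫ r in (a x)..(b x), F x r) := by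
  have h : ∀ x, ∫ r in (a x)..(b x), F x r = (∫ r in (0:ℝ)..(b x), F x r) - ∫ r in (0:ℝ)..(a x), F x r := by
    intro x
    have hi : ∀ p q, IntervalIntegrable (F x) volume p q := fun p q =>
      (hF.comp (Continuous.prodMk_right x)).intervalIntegrable p q
    rw [eq_sub_iff_add_eq, add_comm, intervalIntegral.integral_add_adjacent_intervals (hi _ _) (hi _ _)]
  simp_rw [h]
  exact (intervalIntegral.continuous_parametric_intervalIntegral_of_continuous hF hb).sub
    (intervalIntegral.continuous_parametric_intervalIntegral_of_continuous hF ha)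

/-- averaged derivative -/
def DK (K : ℝ → ℝ) (x y : ℝ) : ℝ := ∫ θ in (0:ℝ)..1, deriv K (x + θ * (y - x))

theorem DK_cont (K : ℝ → ℝ) (hK : ContDiff ℝ 1 K) {X : Type*} [TopologicalSpace X]
    (f g : X → ℝ) (hf : Continuous f) (hg : Continuous g) : Continuous (fun p => DK K (f p) (g p)) := by
  have hd : Continuous (deriv K) := hK.continuous_deriv le_rfl
  unfold DK
  refine cont_int (fun p θ => deriv K (f p + θ * (g p - f p))) ?_ _ _ continuous_const continuous_const
  unfold Function.uncurry
  fun_prop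

theorem DK_mul (K : ℝ → ℝ) (hK : ContDiff ℝ 1 K) (x y : ℝ) : DK K x y * (y - x) = K y - K x := by
  have hd : Continuous (deriv K) := hK.continuous_deriv le_rfl
  unfold DK
  rw [← intervalIntegral.integral_mul_const]
  rw [intervalIntegral.integral_eq_sub_of_hasDerivAt (f := fun θ => K (x + θ * (y - x)))]
  · simp
  · intro t _
    have h1 : HasDerivAt (fun θ : ℝ => x + θ * (y - x)) (y - x) t := by
      simpa using ((hasDerivAt_id t).mul_const (y - x)).const_add x
    exact ((hK.differentiable one_ne_zero).differentiableAt.hasDerivAt).comp t h1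
  · apply Continuous.intervalIntegrable; fun_prop

theorem DK_self (K : ℝ → ℝ) (x : ℝ) : DK K x x = deriv K x := by
  simp [DK]

/-- product with a function vanishing at the point -/
theorem hasDerivAt_mul_vanish {A h : ℝ → ℝ} {a c : ℝ} (hA : HasDerivAt A a c) (h0 : A c = 0)
    (hh : ContinuousAt h c) : HasDerivAt (fun x => A x * h x) (a * h c) c := by
  rw [hasDerivAt_iff_tendsto_slope] at hA ⊢
  have h2 := hA.mul (hh.tendsto.mono_left (nhdsWithin_le_nhds (s := {c}ᶜ)))
  refine h2.congr fun x => ?_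
  simp only [slope_def_field, h0]
  ring

theorem lip_of_bdd (K : ℝ → ℝ) (hK : Differentiable ℝ K) (C : ℝ) (hC : ∀ x, |deriv K x| ≤ C) (x y : ℝ) :
    |K x - K y| ≤ C * |x - y| := by
  have := Convex.norm_image_sub_le_of_norm_deriv_le (f := K) (s := univ) (x := y) (y := x) (C := C)
    (fun x _ => hK x) (fun x _ => hC x) convex_univ trivial trivial
  simpa using this

theorem hasDerivAt_prim (f : ℝ → ℝ) (hf : Continuous f) (a t : ℝ) :
    HasDerivAt (fun s => ∫ r in a..s, f r) (f t) t :=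
  intervalIntegral.integral_hasDerivAt_right (hf.intervalIntegrable _ _)
    hf.stronglyMeasurable.stronglyMeasurableAtFilter hf.continuousAt

theorem contDiff_of_partials (f f1 f2 : ℝ → ℝ → ℝ)
    (h1 : ∀ s c, HasDerivAt (fun x => f x c) (f1 s c) s)
    (h2 : ∀ s c, HasDerivAt (fun x => f s x) (f2 s c) c)
    (c1 : Continuous (Function.uncurry f1)) (c2 : Continuous (Function.uncurry f2)) :
    ContDiff ℝ 1 (Function.uncurry f) ∧ ∀ p : ℝ × ℝ, HasFDerivAt (Function.uncurry f)
      ((ContinuousLinearMap.toSpanSingleton ℝ (f1 p.1 p.2)).coprod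
       (ContinuousLinearMap.toSpanSingleton ℝ (f2 p.1 p.2))) p := by
  have c1' : Continuous (fun p : ℝ × ℝ => f1 p.1 p.2) := c1
  have c2' : Continuous (fun p : ℝ × ℝ => f2 p.1 p.2) := c2
  have d1 : Continuous (fun p : ℝ × ℝ => ContinuousLinearMap.toSpanSingleton ℝ (f1 p.1 p.2)) := by
    have := (ContinuousLinearMap.toSpanSingletonCLE (𝕜 := ℝ) (E := ℝ)).continuous.comp c1'
    exact this
  have d2 : Continuous (fun p : ℝ × ℝ => ContinuousLinearMap.toSpanSingleton ℝ (f2 p.1 p.2)) := by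
    have := (ContinuousLinearMap.toSpanSingletonCLE (𝕜 := ℝ) (E := ℝ)).continuous.comp c2'
    exact this
  have key : ∀ p : ℝ × ℝ, HasFDerivAt (Function.uncurry f)
      ((ContinuousLinearMap.toSpanSingleton ℝ (f1 p.1 p.2)).coprod
       (ContinuousLinearMap.toSpanSingleton ℝ (f2 p.1 p.2))) p := by
    intro p
    exact (hasStrictFDerivAt_uncurry_coprod (𝕜 := ℝ) (u := p) (f := f)
      (f₁ := fun s c => ContinuousLinearMap.toSpanSingleton ℝ (f1 s c))
      (f₂ := fun s c => ContinuousLinearMap.toSpanSingleton ℝ (f2 s c))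
      (Eventually.of_forall fun v => (h1 v.1 v.2).hasFDerivAt)
      (Eventually.of_forall fun v => (h2 v.1 v.2).hasFDerivAt)
      d1.continuousAt d2.continuousAt).hasFDerivAt
  refine ⟨contDiff_one_iff_hasFDerivAt.2 ⟨_, ?_, key⟩, key⟩
  exact (ContinuousLinearMap.coprodEquivL ℝ (𝕜 := ℝ) (E := ℝ) (F := ℝ) (G := ℝ)).continuous.comp (d1.prodMk d2)


theorem hda_congr {f f' : ℝ → ℝ} {a a' x : ℝ} (h : HasDerivAt f a x) (hf : ∀ y, f' y = f y)
    (ha : a' = a) : HasDerivAt f' a' x := by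
  have e : f' = f := funext hf
  rw [e, ha]; exact h

theorem int_exp_bound (h : ℝ → ℝ) (J lam b s : ℝ) (hl : 0 < lam) (hJ : 0 ≤ J)
    (hb : ∀ r, |h r| ≤ J * exp (lam * (b + |r - b|))) :
    |∫ r in b..s, h r| ≤ J / lam * exp (lam * (b + |s - b|)) := by
  rcases le_total b s with hbs | hbs
  · have h1 : ‖∫ r in b..s, h r‖ ≤ ∫ r in b..s, J * exp (lam * r) := by
      apply intervalIntegral.norm_integral_le_of_norm_le hbs
      · refine Eventually.of_forall fun r hr => ?_
        have := hb r
        rw [abs_of_nonneg (by linarith [hr.1] : 0 ≤ r - b), add_sub_cancel] at this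
        exact this
      · apply Continuous.intervalIntegrable; fun_prop
    have h2 : ∫ r in b..s, J * exp (lam * r) = J / lam * exp (lam * s) - J / lam * exp (lam * b) := by
      refine intervalIntegral.integral_eq_sub_of_hasDerivAt (f := fun r => J / lam * exp (lam * r)) ?_ ?_
      · intro t _
        have : HasDerivAt (fun r => lam * r) lam t := by simpa using (hasDerivAt_id t).const_mul lam
        have e : J * exp (lam * t) = J / lam * (exp (lam * t) * lam) := by field_simp
        rw [e]
        exact (this.exp).const_mul (J / lam)
      · apply Continuous.intervalIntegrable; fun_prop
    rw [abs_of_nonneg (by linarith : 0 ≤ s - b)]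
    rw [Real.norm_eq_abs, h2] at h1
    have : 0 ≤ J / lam * exp (lam * b) := by positivity
    simp only [add_sub_cancel]
    linarith
  · have h1 : ‖∫ r in s..b, h r‖ ≤ ∫ r in s..b, J * exp (lam * (2 * b - r)) := by
      apply intervalIntegral.norm_integral_le_of_norm_le hbs
      · refine Eventually.of_forall fun r hr => ?_
        have := hb r
        rw [abs_of_nonpos (by linarith [hr.2] : r - b ≤ 0)] at this
        have e : b + -(r - b) = 2 * b - r := by ring
        rw [e] at this
        exact this
      · apply Continuous.intervalIntegrable; fun_prop
    have h2 : ∫ r in s..b, J * exp (lam * (2 * b - r))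
        = - (J / lam) * exp (lam * (2 * b - b)) - -(J / lam) * exp (lam * (2 * b - s)) := by
      refine intervalIntegral.integral_eq_sub_of_hasDerivAt
        (f := fun r => -(J / lam) * exp (lam * (2 * b - r))) ?_ ?_
      · intro t _
        have : HasDerivAt (fun r => lam * (2 * b - r)) (lam * -1) t := by
          simpa using ((hasDerivAt_id t).const_sub (2 * b)).const_mul lam
        have e : J * exp (lam * (2 * b - t)) = -(J / lam) * (exp (lam * (2 * b - t)) * (lam * -1)) := by
          field_simp
        rw [e]
        exact (this.exp).const_mul (-(J / lam))
      · apply Continuous.intervalIntegrable; fun_prop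
    rw [intervalIntegral.integral_symm, abs_neg]
    rw [abs_of_nonpos (by linarith : s - b ≤ 0)]
    rw [Real.norm_eq_abs, h2] at h1
    have : 0 ≤ J / lam * exp (lam * (2 * b - b)) := by positivity
    have e : b + -(s - b) = 2 * b - s := by ring
    rw [e]
    linarith

/-- the weight -/
def wt (lam : ℝ) (p : ℝ × ℝ) : ℝ :=
  max 1 (-p.2) * exp (lam * (max p.2 0 + |p.1 - max p.2 0|)) * (4 - 3 * min 1 (max 0 (p.1 - p.2)))

theorem wt_cont (lam : ℝ) : Continuous (wt lam) := by unfold wt; fun_prop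

theorem wt_le (lam s c : ℝ) :
    wt lam (s, c) ≤ 4 * (max 1 (-c) * exp (lam * (max c 0 + |s - max c 0|))) := by
  unfold wt
  simp only
  have : 0 ≤ max 1 (-c) * exp (lam * (max c 0 + |s - max c 0|)) := by positivity
  have h2 : 0 ≤ min 1 (max 0 (s - c)) := by positivity
  nlinarith

theorem le_wt (lam s c : ℝ) :
    max 1 (-c) * exp (lam * (max c 0 + |s - max c 0|)) ≤ wt lam (s, c) := by
  unfold wt
  simp only
  have : 0 ≤ max 1 (-c) * exp (lam * (max c 0 + |s - max c 0|)) := by positivity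
  have h2 : min 1 (max 0 (s - c)) ≤ 1 := min_le_left _ _
  nlinarith

theorem wt_pos (lam : ℝ) (p : ℝ × ℝ) : 0 < wt lam p :=
  lt_of_lt_of_le (by positivity) (le_wt lam p.1 p.2)

theorem wt_diag (lam c : ℝ) (hc : 0 ≤ c) : wt lam (c, c - 1) = exp (lam * c) := by
  unfold wt
  simp only
  have h1 : max 1 (-(c - 1)) = 1 := max_eq_left (by linarith)
  have h2 : max (c - 1) 0 ≤ c := max_le (by linarith) hc
  rw [h1, abs_of_nonneg (by linarith)]
  simp
  norm_num

theorem wt_ge (lam s c : ℝ) (hl : 3 ≤ lam) (hc : 0 ≤ c) : 4 * exp (lam * c) ≤ wt lam (s, c) := by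
  unfold wt
  simp only
  rw [max_eq_left hc, max_eq_left (by linarith : -c ≤ 1), one_mul, mul_add, exp_add]
  have h1 : 1 + lam * |s - c| ≤ exp (lam * |s - c|) := by linarith [add_one_le_exp (lam * |s - c|)]
  have h2 : 4 ≤ exp (lam * |s - c|) * (4 - 3 * min 1 (max 0 (s - c))) := by
    have h0 : 0 ≤ |s - c| := abs_nonneg _
    have hx : s - c ≤ |s - c| := le_abs_self _
    set m := min 1 (max 0 (s - c)) with hm
    have m0 : 0 ≤ m := by positivity
    have m1 : m ≤ 1 := min_le_left _ _
    have mx : m ≤ |s - c| := (min_le_right _ _).trans (max_le h0 hx)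
    have h3 : 1 + 3 * m ≤ exp (lam * |s - c|) := by nlinarith
    nlinarith
  have := exp_pos (lam * c)
  nlinarith

theorem exists_U (K : ℝ → ℝ) (hKc : Continuous K) (L : ℝ) (hL0 : 0 ≤ L)
    (hLip : ∀ x y, |K x - K y| ≤ L * |x - y|) (ΦF : ℝ) (q : ℝ → ℝ) (hq : Continuous q)
    (G : ℝ) (hG : ∀ x, 0 ≤ x → |q x| ≤ G * max 1 x) :
    ∃ U : ℝ × ℝ → ℝ, Continuous U ∧ ∀ s c, U (s, c) = q (max (-c) 0)
      + (U (max c 0, max c 0 - 1) - U (0, -1))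
      + ∫ r in (max c 0)..s, K (U (r, c) + (ΦF - U (max r 0, max r 0 - 1))) := by
  set lam : ℝ := max 3 (20 * L) with hlam
  have hl3 : 3 ≤ lam := le_max_left _ _
  have hl20 : 20 * L ≤ lam := le_max_right _ _
  have hl : 0 < lam := by linarith
  have hG0 : 0 ≤ G := by
    have := hG 0 le_rfl
    have h2 := abs_nonneg (q 0)
    simp at this; linarith
  let Γ : (ℝ × ℝ → ℝ) → (ℝ × ℝ → ℝ) := fun U p => q (max (-p.2) 0)
      + (U (max p.2 0, max p.2 0 - 1) - U (0, -1))
      + ∫ r in (max p.2 0)..p.1, K (U (r, p.2) + (ΦF - U (max r 0, max r 0 - 1)))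
  have hcF : ∀ U : ℝ × ℝ → ℝ, Continuous U → Continuous
      (fun z : (ℝ × ℝ) × ℝ => K (U (z.2, z.1.2) + (ΦF - U (max z.2 0, max z.2 0 - 1)))) := by
    intro U hU
    fun_prop
  obtain ⟨U, hU, hfix⟩ := wfix (wt lam) (wt_cont lam) (wt_pos lam) Γ (by
      intro U hU
      refine Continuous.add (by fun_prop) ?_
      exact cont_int (fun (p : ℝ × ℝ) r => K (U (r, p.2) + (ΦF - U (max r 0, max r 0 - 1))))
        (hcF U hU) _ _ (by fun_prop) (by fun_prop))
    (G + |K ΦF| / lam) (by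
      rintro ⟨s, c⟩
      simp only [Γ]
      have h1 : |q (max (-c) 0)| ≤ G * wt lam (s, c) := by
        refine (hG _ (le_max_right _ _)).trans (mul_le_mul_of_nonneg_left ?_ hG0)
        refine le_trans ?_ (le_wt lam s c)
        have : max 1 (max (-c) 0) = max 1 (-c) := by
          rw [← max_assoc]; exact max_eq_left (le_trans zero_le_one (le_max_left _ _))
        rw [this]
        have e1 : 1 ≤ exp (lam * (max c 0 + |s - max c 0|)) := by
          rw [one_le_exp_iff]; positivity
        exact le_mul_of_one_le_right (by positivity) e1
      have h2 := int_exp_bound (fun r => K (0 + (ΦF - 0))) |K ΦF| lam (max c 0) s hl (abs_nonneg _)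
        (by
          intro r
          have e1 : 1 ≤ exp (lam * (max c 0 + |r - max c 0|)) := by
            rw [one_le_exp_iff]; positivity
          simpa using le_mul_of_one_le_right (abs_nonneg (K ΦF)) e1)
      have h3 : exp (lam * (max c 0 + |s - max c 0|)) ≤ wt lam (s, c) :=
        le_trans (le_mul_of_one_le_left (by positivity) (le_max_left _ _)) (le_wt lam s c)
      have h4 : |K ΦF| / lam * exp (lam * (max c 0 + |s - max c 0|)) ≤ |K ΦF| / lam * wt lam (s, c) :=
        mul_le_mul_of_nonneg_left h3 (by positivity)
      have h5 := abs_add_le (q (max (-c) 0) + (0 - 0)) (∫ r in (max c 0)..s, K (0 + (ΦF - 0)))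
      have h6 : |q (max (-c) 0) + (0 - 0)| = |q (max (-c) 0)| := by simp
      rw [h6] at h5
      rw [add_mul]
      exact h5.trans (add_le_add h1 (h2.trans h4)))
    (3/4) (by norm_num) (by norm_num) (by
      rintro f g C hf hg hC hfg ⟨s, c⟩
      simp only [Γ]
      set A := max 1 (-c) with hA
      have hA1 : 1 ≤ A := le_max_left _ _
      have hi : ∀ f : ℝ × ℝ → ℝ, Continuous f → IntervalIntegrable
          (fun r => K (f (r, c) + (ΦF - f (max r 0, max r 0 - 1)))) volume (max c 0) s := by
        intro f hf
        apply Continuous.intervalIntegrable; fun_prop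
      have h1 : |(f (max c 0, max c 0 - 1) - f (0, -1)) - (g (max c 0, max c 0 - 1) - g (0, -1))|
          ≤ 1/2 * C * wt lam (s, c) := by
        rcases le_total c 0 with hc | hc
        · rw [max_eq_right hc]
          have := wt_pos lam (s, c)
          simp only [zero_sub, sub_self, abs_zero]
          positivity
        · rw [max_eq_left hc]
          have a1 := hfg (c, c - 1)
          have a2 := hfg (0, -1)
          rw [wt_diag lam c hc] at a1
          have a3 := wt_diag lam 0 le_rfl
          simp only [zero_sub, mul_zero, exp_zero] at a3
          rw [a3] at a2
          have a4 := wt_ge lam s c hl3 hc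
          have a5 : 1 ≤ exp (lam * c) := by rw [one_le_exp_iff]; positivity
          have a6 : |(f (c, c - 1) - f (0, -1)) - (g (c, c - 1) - g (0, -1))|
              ≤ |f (c, c - 1) - g (c, c - 1)| + |f (0, -1) - g (0, -1)| := by
            rw [sub_sub_sub_comm]
            exact abs_sub _ _
          nlinarith
      have h2 := int_exp_bound (fun r => K (f (r, c) + (ΦF - f (max r 0, max r 0 - 1)))
          - K (g (r, c) + (ΦF - g (max r 0, max r 0 - 1)))) (5 * L * C * A) lam (max c 0) s hl
          (by positivity) (by
        intro r
        have a1 := hfg (r, c)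
        have a2 := hfg (max r 0, max r 0 - 1)
        have hr0 : 0 ≤ max r 0 := le_max_right _ _
        rw [wt_diag lam _ hr0] at a2
        have a3 := wt_le lam r c
        have a4 : exp (lam * max r 0) ≤ exp (lam * (max c 0 + |r - max c 0|)) := by
          apply exp_le_exp.2
          apply mul_le_mul_of_nonneg_left _ hl.le
          apply max_le
          · linarith [le_abs_self (r - max c 0)]
          · positivity
        have a5 := hLip (f (r, c) + (ΦF - f (max r 0, max r 0 - 1)))
          (g (r, c) + (ΦF - g (max r 0, max r 0 - 1)))
        have a6 : |f (r, c) + (ΦF - f (max r 0, max r 0 - 1))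
            - (g (r, c) + (ΦF - g (max r 0, max r 0 - 1)))|
            ≤ |f (r, c) - g (r, c)| + |f (max r 0, max r 0 - 1) - g (max r 0, max r 0 - 1)| := by
          have e : f (r, c) + (ΦF - f (max r 0, max r 0 - 1))
            - (g (r, c) + (ΦF - g (max r 0, max r 0 - 1))) = (f (r, c) - g (r, c))
            - (f (max r 0, max r 0 - 1) - g (max r 0, max r 0 - 1)) := by ring
          rw [e]
          exact abs_sub _ _
        set E := exp (lam * (max c 0 + |r - max c 0|)) with hE
        have hE0 : 0 < E := exp_pos _
        have a7 : |f (r, c) + (ΦF - f (max r 0, max r 0 - 1))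
            - (g (r, c) + (ΦF - g (max r 0, max r 0 - 1)))| ≤ 5 * C * A * E := by
          have b1 : C * wt lam (r, c) ≤ C * (4 * (A * E)) := mul_le_mul_of_nonneg_left a3 hC
          have b2 : C * exp (lam * max r 0) ≤ C * (A * E) :=
            mul_le_mul_of_nonneg_left (a4.trans (le_mul_of_one_le_left hE0.le hA1)) hC
          linarith
        calc _ ≤ _ := a5
          _ ≤ L * (5 * C * A * E) := mul_le_mul_of_nonneg_left a7 hL0
          _ = _ := by ring)
      rw [intervalIntegral.integral_sub (hi f hf) (hi g hg)] at h2
      have h3 : 5 * L * C * A / lam * exp (lam * (max c 0 + |s - max c 0|))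
          ≤ 1/4 * C * wt lam (s, c) := by
        have b1 := le_wt lam s c
        have b2 : 5 * L * C * A / lam * exp (lam * (max c 0 + |s - max c 0|))
          = (5 * L / lam) * (C * (A * exp (lam * (max c 0 + |s - max c 0|)))) := by ring
        rw [b2]
        have b3 : 5 * L / lam ≤ 1/4 := by rw [div_le_iff₀ hl]; linarith
        have b4 : C * (A * exp (lam * (max c 0 + |s - max c 0|))) ≤ C * wt lam (s, c) :=
          mul_le_mul_of_nonneg_left b1 hC
        calc _ ≤ (1/4) * (C * wt lam (s, c)) := mul_le_mul b3 b4 (by positivity) (by norm_num)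
          _ = _ := by ring
      have h4 := abs_add_le ((f (max c 0, max c 0 - 1) - f (0, -1)) - (g (max c 0, max c 0 - 1) - g (0, -1)))
        ((∫ r in (max c 0)..s, K (f (r, c) + (ΦF - f (max r 0, max r 0 - 1))))
          - ∫ r in (max c 0)..s, K (g (r, c) + (ΦF - g (max r 0, max r 0 - 1))))
      refine le_trans (le_of_eq ?_) (h4.trans ?_)
      · congr 1; ring
      · linarith)
  exact ⟨U, hU, fun s c => (hfix (s, c)).symm⟩

/-- propagator of differences along the flow -/
def Hf (K : ℝ → ℝ) (U : ℝ × ℝ → ℝ) (M : ℝ → ℝ) (b s c c' : ℝ) : ℝ :=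
  exp (∫ r in b..s, DK K (U (r, c) + M r) (U (r, c') + M r))

theorem Hf_integrand_cont (K : ℝ → ℝ) (hK : ContDiff ℝ 1 K) (U : ℝ × ℝ → ℝ) (hU : Continuous U)
    (M : ℝ → ℝ) (hM : Continuous M) (c c' : ℝ) :
    Continuous (fun r => DK K (U (r, c) + M r) (U (r, c') + M r)) :=
  DK_cont K hK _ _ (by fun_prop) (by fun_prop)

theorem Hf_cont (K : ℝ → ℝ) (hK : ContDiff ℝ 1 K) (U : ℝ × ℝ → ℝ) (hU : Continuous U)
    (M : ℝ → ℝ) (hM : Continuous M) {X : Type*} [TopologicalSpace X] (b s c c' : X → ℝ)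
    (hb : Continuous b) (hs : Continuous s) (hc : Continuous c) (hc' : Continuous c') :
    Continuous (fun x => Hf K U M (b x) (s x) (c x) (c' x)) := by
  unfold Hf
  refine continuous_exp.comp ?_
  refine cont_int (fun x r => DK K (U (r, c x) + M r) (U (r, c' x) + M r)) ?_ _ _ hb hs
  exact DK_cont K hK (fun z : X × ℝ => U (z.2, c z.1) + M z.2) (fun z : X × ℝ => U (z.2, c' z.1) + M z.2)
    (by fun_prop) (by fun_prop)

theorem Hf_mul (K : ℝ → ℝ) (hK : ContDiff ℝ 1 K) (U : ℝ × ℝ → ℝ) (hU : Continuous U)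
    (M : ℝ → ℝ) (hM : Continuous M) (a b s c c' : ℝ) :
    Hf K U M a b c c' * Hf K U M b s c c' = Hf K U M a s c c' := by
  have hc := Hf_integrand_cont K hK U hU M hM c c'
  unfold Hf
  rw [← exp_add, intervalIntegral.integral_add_adjacent_intervals (hc.intervalIntegrable _ _)
    (hc.intervalIntegrable _ _)]

theorem DK_le (K : ℝ → ℝ) (L : ℝ) (hL : ∀ x, |deriv K x| ≤ L) (x y : ℝ) : |DK K x y| ≤ L := by
  have := intervalIntegral.norm_integral_le_of_norm_le_const (a := (0:ℝ)) (b := 1) (C := L)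
    (f := fun θ => deriv K (x + θ * (y - x))) (fun θ _ => hL _)
  simpa [DK] using this

theorem Hf_le (K : ℝ → ℝ) (U : ℝ × ℝ → ℝ)
    (M : ℝ → ℝ) (L : ℝ) (hL : ∀ x, |deriv K x| ≤ L) (b s c c' : ℝ)
    (h : |s - b| ≤ 1) : Hf K U M b s c c' ≤ exp L := by
  unfold Hf
  apply exp_le_exp.2
  have h1 := intervalIntegral.norm_integral_le_of_norm_le_const (a := b) (b := s) (C := L)
    (f := fun r => DK K (U (r, c) + M r) (U (r, c') + M r)) (fun θ _ => DK_le K L hL _ _)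
  have h2 : 0 ≤ L := (abs_nonneg _).trans (hL 0)
  rw [Real.norm_eq_abs] at h1
  have h3 := le_abs_self (∫ r in b..s, DK K (U (r, c) + M r) (U (r, c') + M r))
  nlinarith

theorem ratio (K : ℝ → ℝ) (hK : ContDiff ℝ 1 K) (U : ℝ × ℝ → ℝ) (hU : Continuous U)
    (M : ℝ → ℝ) (hM : Continuous M)
    (hode : ∀ c t, HasDerivAt (fun s => U (s, c)) (K (U (t, c) + M t)) t) (b s c c' : ℝ) :
    U (s, c') - U (s, c) = (U (b, c') - U (b, c)) * Hf K U M b s c c' := by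
  have hc := Hf_integrand_cont K hK U hU M hM c c'
  set κ := fun r => DK K (U (r, c) + M r) (U (r, c') + M r) with hκ
  have hd : ∀ t, HasDerivAt (fun s => (U (s, c') - U (s, c)) * exp (-∫ r in b..s, κ r)) 0 t := by
    intro t
    have h1 := (hode c' t).sub (hode c t)
    have h2 := ((hasDerivAt_prim κ hc b t).neg).exp
    have h3 := h1.mul h2
    have h4 := DK_mul K hK (U (t, c) + M t) (U (t, c') + M t)
    refine hda_congr h3 (fun y => by simp) ?_
    have h5 : κ t * (U (t, c') - U (t, c)) = K (U (t, c') + M t) - K (U (t, c) + M t) := by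
      rw [← h4]; simp only [hκ]; ring
    rw [← h5]
    simp only [Pi.neg_apply, Pi.sub_apply]
    ring
  have hconst := is_const_of_deriv_eq_zero (fun t => (hd t).differentiableAt) (fun t => (hd t).deriv) s b
  simp only [intervalIntegral.integral_same, neg_zero, exp_zero, mul_one] at hconst
  have hH : Hf K U M b s c c' = exp (∫ r in b..s, κ r) := rfl
  rw [hH, ← hconst, mul_assoc, ← exp_add]
  simp

theorem exists_p (K : ℝ → ℝ) (hK : ContDiff ℝ 1 K) (L : ℝ) (hL : ∀ x, |deriv K x| ≤ L)
    (U : ℝ × ℝ → ℝ) (hU : Continuous U)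
    (M : ℝ → ℝ) (hM : Continuous M) (g : ℝ → ℝ) (hg : Continuous g) (G : ℝ) (hG : ∀ x, |g x| ≤ G) :
    ∃ p : ℝ → ℝ, Continuous p ∧ (∀ c ≤ 0, p c = g (-c)) ∧
      ∀ c, 0 ≤ c → p c = p (c - 1) * Hf K U M (max (c - 1) 0) c (c - 1) (c - 1) + g 0 - g 1 := by
  have hL0 : 0 ≤ L := (abs_nonneg _).trans (hL 0)
  have hG0 : 0 ≤ G := (abs_nonneg _).trans (hG 0)
  set lam := L + 2 with hlam
  let Γ : (ℝ → ℝ) → (ℝ → ℝ) := fun p c => g (max (-c) 0) +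
    (p (max c 0 - 1) * Hf K U M (max (max c 0 - 1) 0) (max c 0) (max c 0 - 1) (max c 0 - 1) - p (-1))
  have H0 : Hf K U M 0 0 (-1) (-1) = 1 := by simp [Hf]
  have hneg : ∀ p : ℝ → ℝ, ∀ c ≤ 0, Γ p c = g (-c) := by
    intro p c hc
    simp only [Γ]
    rw [max_eq_right hc, max_eq_left (by linarith : (0:ℝ) ≤ -c)]
    norm_num [H0]
  have hpos : ∀ p : ℝ → ℝ, ∀ c, 0 ≤ c → Γ p c =
      g 0 + (p (c - 1) * Hf K U M (max (c - 1) 0) c (c - 1) (c - 1) - p (-1)) := by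
    intro p c hc
    simp only [Γ]
    rw [max_eq_left hc, max_eq_right (by linarith : -c ≤ 0)]
  obtain ⟨p, hp, hfix⟩ := wfix (fun c : ℝ => exp (lam * max c (-1))) (by fun_prop)
    (fun c => exp_pos _) Γ (by
      intro p hp
      have := Hf_cont K hK U hU M hM (fun c : ℝ => max (max c 0 - 1) 0) (fun c => max c 0)
        (fun c => max c 0 - 1) (fun c => max c 0 - 1) (by fun_prop) (by fun_prop) (by fun_prop)
        (by fun_prop)
      simp only [Γ]
      fun_prop) (G * exp lam) (by
      intro c
      have h1 : |Γ (fun _ => 0) c| ≤ G := by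
        simp only [Γ]; simpa using hG _
      refine h1.trans ?_
      rw [mul_assoc, ← exp_add]
      apply le_mul_of_one_le_right hG0
      rw [one_le_exp_iff]
      have : -1 ≤ max c (-1) := le_max_right _ _
      nlinarith) (2/3) (by norm_num) (by norm_num) (by
      intro f h C _ _ hC hfh c
      rcases le_total c 0 with hc | hc
      · rw [hneg f c hc, hneg h c hc, sub_self, abs_zero]; positivity
      · rw [hpos f c hc, hpos h c hc]
        have a1 := hfh (c - 1)
        have a2 := hfh (-1)
        simp only [max_self] at a2
        rw [max_eq_left (by linarith : -1 ≤ c - 1)] at a1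
        rw [max_eq_left (by linarith : -1 ≤ c)]
        set H := Hf K U M (max (c - 1) 0) c (c - 1) (c - 1) with hH
        have H1 : H ≤ exp L := by
          apply Hf_le K U M L hL
          rcases le_total (c - 1) 0 with h | h
          · rw [max_eq_right h, abs_of_nonneg (by linarith)]; linarith
          · rw [max_eq_left h, abs_of_nonneg (by linarith)]; linarith
        have H2 : 0 < H := exp_pos _
        have e1 : g 0 + (f (c - 1) * H - f (-1)) - (g 0 + (h (c - 1) * H - h (-1)))
          = (f (c - 1) - h (c - 1)) * H - (f (-1) - h (-1)) := by ring
        rw [e1]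
        have h3 := abs_sub ((f (c - 1) - h (c - 1)) * H) (f (-1) - h (-1))
        rw [abs_mul, abs_of_pos H2] at h3
        have h4 : |f (c - 1) - h (c - 1)| * H ≤ (C * exp (lam * (c - 1))) * exp L :=
          mul_le_mul a1 H1 H2.le (by positivity)
        have h5 : (C * exp (lam * (c - 1))) * exp L = C * exp (lam * c) * exp (-2) := by
          rw [mul_assoc, ← exp_add, mul_assoc, ← exp_add]; congr 2; rw [hlam]; ring
        have h6 : C * exp (lam * -1) ≤ C * exp (lam * c) * exp (-2) := by
          rw [mul_assoc, ← exp_add]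
          apply mul_le_mul_of_nonneg_left _ hC
          apply exp_le_exp.2
          nlinarith
        have h7 : exp (-2 : ℝ) ≤ 1/3 := by
          rw [exp_neg]
          have := add_one_le_exp (2:ℝ)
          rw [one_div]
          exact inv_anti₀ (by norm_num) (by linarith)
        have h8 : C * exp (lam * c) * exp (-2) ≤ C * exp (lam * c) * (1/3) :=
          mul_le_mul_of_nonneg_left h7 (by positivity)
        linarith)
  have hp0 : ∀ c ≤ 0, p c = g (-c) := fun c hc => by rw [← hfix c, hneg p c hc]
  refine ⟨p, hp, hp0, fun c hc => ?_⟩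
  have := hp0 (-1) (by norm_num)
  rw [neg_neg] at this
  conv_lhs => rw [← hfix c, hpos p c hc]
  rw [this]; ring

theorem W_deriv (K : ℝ → ℝ) (hK : ContDiff ℝ 1 K) (U : ℝ × ℝ → ℝ) (hU : Continuous U)
    (M : ℝ → ℝ) (hM : Continuous M)
    (hode : ∀ c t, HasDerivAt (fun s => U (s, c)) (K (U (t, c) + M t)) t)
    (ΦF : ℝ) (q g p : ℝ → ℝ) (hq : ∀ x, HasDerivAt q (g x) x)
    (hMU : ∀ r, 0 ≤ r → M r = ΦF - U (r, r - 1))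
    (hneg : ∀ c ≤ 0, U (0, c) = q (-c))
    (hpos : ∀ c, 0 ≤ c → U (c, c) = U (c, c - 1) - ΦF)
    (hp0 : ∀ c ≤ 0, p c = g (-c))
    (hp1 : ∀ c, 0 ≤ c → p c = p (c - 1) * Hf K U M (max (c - 1) 0) c (c - 1) (c - 1) + K 0 - K ΦF) :
    ∀ c, HasDerivAt (fun x => U (0, x)) (-p c * Hf K U M (max c 0) 0 c c) c := by
  have hrat := ratio K hK U hU M hM hode
  -- reduction
  have red : ∀ c, HasDerivAt (fun x => U (max x 0, x) - U (max x 0, c)) (-p c) c →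
      HasDerivAt (fun x => U (0, x)) (-p c * Hf K U M (max c 0) 0 c c) c := by
    intro c hA
    have hcont : Continuous (fun x => Hf K U M (max x 0) 0 c x) :=
      Hf_cont K hK U hU M hM _ _ _ _ (by fun_prop) (by fun_prop) (by fun_prop) (by fun_prop)
    have h1 := hasDerivAt_mul_vanish hA (by simp) hcont.continuousAt
    have h2 := h1.const_add (U (0, c))
    refine hda_congr h2 (fun x => ?_) rfl
    have := hrat (max x 0) 0 c x
    linarith
  have left : ∀ c ≤ 0, HasDerivAt (fun x => q (-x) - U (0, c)) (-p c) c := by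
    intro c hc
    have h1 : HasDerivAt (fun x => q (-x)) (g (-c) * -1) c :=
      (hq (-c)).comp c (hasDerivAt_neg c)
    rw [hp0 c hc]
    refine hda_congr (h1.sub_const (U (0, c))) (fun x => rfl) ?_
    ring
  have right : ∀ c, 0 ≤ c → HasDerivAt (fun x => U (0, x))
      (-p (c - 1) * Hf K U M (max (c - 1) 0) 0 (c - 1) (c - 1)) (c - 1) →
      HasDerivAt (fun x => U (x, x - 1) - ΦF - U (x, c)) (-p c) c := by
    intro c hc hW
    have h1 := hode (c - 1) c
    have h2 := hode c c
    have h3 : HasDerivAt (fun x => U (0, x - 1) - U (0, c - 1))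
        (-p (c - 1) * Hf K U M (max (c - 1) 0) 0 (c - 1) (c - 1)) c := by
      have := HasDerivAt.comp_sub_const (f := fun x => U (0, x)) c 1 hW
      exact this.sub_const _
    have hcont : Continuous (fun x => Hf K U M 0 x (c - 1) (x - 1)) :=
      Hf_cont K hK U hU M hM _ _ _ _ (by fun_prop) (by fun_prop) (by fun_prop) (by fun_prop)
    have h4 := hasDerivAt_mul_vanish h3 (by simp) hcont.continuousAt
    have h5 := ((h1.add h4).sub_const ΦF).sub h2
    refine hda_congr h5 (fun x => ?_) ?_
    · have := hrat 0 x (c - 1) (x - 1)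
      simp only [Pi.add_apply, Pi.sub_apply]
      linarith
    · rw [mul_assoc, Hf_mul K hK U hU M hM, hp1 c hc, hpos c hc, hMU c hc]
      simp only [add_sub_cancel, sub_add_sub_cancel, sub_self]
      ring
  have caseneg : ∀ c < 0, HasDerivAt (fun x => U (0, x)) (-p c * Hf K U M (max c 0) 0 c c) c := by
    intro c hc
    apply red
    refine (left c hc.le).congr_of_eventuallyEq ?_
    filter_upwards [Iio_mem_nhds hc] with x hx
    rw [max_eq_right (le_of_lt hx), hneg x (le_of_lt hx)]
  have main : ∀ n : ℕ, ∀ c < (n : ℝ),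
      HasDerivAt (fun x => U (0, x)) (-p c * Hf K U M (max c 0) 0 c c) c := by
    intro n
    induction n with
    | zero => intro c hc; exact caseneg c (by simpa using hc)
    | succ n ih =>
      intro c hc
      rcases lt_or_ge c 0 with h | h
      · exact caseneg c h
      push_cast at hc
      have hr := right c h (ih (c - 1) (by linarith))
      apply red
      rcases h.eq_or_lt with h0 | h0
      · subst h0
        have h1 : HasDerivWithinAt (fun x => U (max x 0, x) - U (max x 0, 0)) (-p 0) (Iic 0) 0 := by
          refine (left 0 le_rfl).hasDerivWithinAt.congr_of_mem (fun x hx => ?_) self_mem_Iic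
          rw [max_eq_right hx, hneg x hx]
        have h2 : HasDerivWithinAt (fun x => U (max x 0, x) - U (max x 0, 0)) (-p 0) (Ici 0) 0 := by
          refine hr.hasDerivWithinAt.congr_of_mem (fun x hx => ?_) self_mem_Ici
          rw [max_eq_left hx, hpos x hx]
        have := h1.union h2
        rwa [Iic_union_Ici, hasDerivWithinAt_univ] at this
      · refine hr.congr_of_eventuallyEq ?_
        filter_upwards [Ioi_mem_nhds h0] with x hx
        rw [max_eq_left (le_of_lt hx), hpos x (le_of_lt hx)]
  intro c
  obtain ⟨n, hn⟩ := exists_nat_gt c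
  exact main n c hn

theorem init_ext (Qinit : ℝ → ℝ) (hreg : ContDiffOn ℝ 1 Qinit (Icc 0 1)) (h0 : Qinit 0 = 0) :
    ∃ (q g : ℝ → ℝ) (G : ℝ), Continuous g ∧ (∀ x, HasDerivAt q (g x) x) ∧
      (∀ x ∈ Icc (0:ℝ) 1, q x = Qinit x) ∧ g 0 = derivWithin Qinit (Icc 0 1) 0 ∧
      g 1 = derivWithin Qinit (Icc 0 1) 1 ∧ (∀ x, |g x| ≤ G) ∧
      (∀ x, 0 ≤ x → |q x| ≤ G * max 1 x) := by
  have hdc : ContinuousOn (derivWithin Qinit (Icc 0 1)) (Icc 0 1) :=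
    hreg.continuousOn_derivWithin (uniqueDiffOn_Icc zero_lt_one) le_rfl
  set g : ℝ → ℝ := IccExtend (zero_le_one' ℝ) ((Icc (0:ℝ) 1).domRestrict (derivWithin Qinit (Icc 0 1)))
    with hg
  have hgc : Continuous g := by
    have := continuousOn_iff_continuous_domRestrict.1 hdc
    exact this.Icc_extend'
  have hgI : ∀ x ∈ Icc (0:ℝ) 1, g x = derivWithin Qinit (Icc 0 1) x := fun x hx => by
    rw [hg, IccExtend_of_mem _ _ hx]; rfl
  obtain ⟨G, hG⟩ := isCompact_Icc.exists_bound_of_continuousOn hdc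
  have hGg : ∀ x, |g x| ≤ G := fun x => by
    rw [hg]
    simp only [IccExtend, Function.comp_apply]
    exact hG _ (Subtype.mem _)
  have hG0 : 0 ≤ G := (abs_nonneg _).trans (hGg 0)
  refine ⟨fun x => ∫ r in (0:ℝ)..x, g r, g, G, hgc, fun x => hasDerivAt_prim g hgc 0 x, ?_,
    hgI 0 (by simp), hgI 1 (by simp), hGg, ?_⟩
  · intro x hx
    have := intervalIntegral.integral_eq_sub_of_hasDerivAt_of_le (f := Qinit) (f' := g) hx.1
      (hreg.continuousOn.mono (Icc_subset_Icc_right hx.2)) (fun y hy => by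
        have hy1 : y ∈ Ioo (0:ℝ) 1 := ⟨hy.1, hy.2.trans_le hx.2⟩
        rw [hgI y (Ioo_subset_Icc_self hy1)]
        exact ((hreg.differentiableOn one_ne_zero) y
          (Ioo_subset_Icc_self hy1)).hasDerivWithinAt.hasDerivAt (Icc_mem_nhds hy1.1 hy1.2))
      (hgc.intervalIntegrable _ _)
    simp only [this, h0, sub_zero]
  · intro x hx
    have := intervalIntegral.norm_integral_le_of_norm_le_const (a := (0:ℝ)) (b := x) (C := G)
      (f := g) (fun θ _ => hGg _)
    rw [Real.norm_eq_abs, sub_zero, abs_of_nonneg hx] at this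
    exact this.trans (mul_le_mul_of_nonneg_left (le_max_right _ _) hG0)

theorem mem_Ico0_top (τ : ℝ) : τ ∈ Ico0 ⊤ ↔ 0 ≤ τ := by
  simp [Ico0]

theorem exists_flow (K : ℝ → ℝ) (hK : ContDiff ℝ 1 K) (L : ℝ) (hL : ∀ x, |deriv K x| ≤ L)
    (ΦF : ℝ) (q g : ℝ → ℝ) (G : ℝ) (hgc : Continuous g) (hq : ∀ x, HasDerivAt q (g x) x)
    (hG : ∀ x, |g x| ≤ G) (hqG : ∀ x, 0 ≤ x → |q x| ≤ G * max 1 x) (hq0 : q 0 = 0) (hq1 : q 1 = ΦF)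
    (hcomp : g 1 - g 0 = K ΦF - K 0) :
    ∃ (U Uc : ℝ → ℝ → ℝ) (M : ℝ → ℝ), Continuous (Function.uncurry U) ∧
      Continuous (Function.uncurry Uc) ∧ Continuous M ∧
      (∀ r, 0 ≤ r → M r = ΦF - U r (r - 1)) ∧
      (∀ s c, HasDerivAt (fun x => U x c) (K (U s c + M s)) s) ∧
      (∀ s c, HasDerivAt (fun x => U s x) (Uc s c) c) ∧
      (∀ c ≤ 0, U 0 c = q (-c)) ∧ (∀ c, 0 ≤ c → U c c = U c (c - 1) - ΦF) := by
  have hL0 : 0 ≤ L := (abs_nonneg _).trans (hL 0)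
  have hqc : Continuous q := continuous_iff_continuousAt.2 fun x => (hq x).continuousAt
  obtain ⟨U, hU, hfix⟩ := exists_U K hK.continuous L hL0
    (lip_of_bdd K (hK.differentiable one_ne_zero) L hL) ΦF q hqc G hqG
  set M : ℝ → ℝ := fun r => ΦF - U (max r 0, max r 0 - 1) with hM
  have hMc : Continuous M := by rw [hM]; fun_prop
  have hMU : ∀ r, 0 ≤ r → M r = ΦF - U (r, r - 1) := fun r hr => by
    simp only [hM, max_eq_left hr]
  have hode : ∀ c t, HasDerivAt (fun s => U (s, c)) (K (U (t, c) + M t)) t := by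
    intro c t
    have h1 := (hasDerivAt_prim (fun r => K (U (r, c) + M r))
      (by have := hK.continuous; fun_prop) (max c 0) t).const_add
      (q (max (-c) 0) + (U (max c 0, max c 0 - 1) - U (0, -1)))
    exact hda_congr h1 (fun y => hfix y c) rfl
  have hneg : ∀ c ≤ 0, U (0, c) = q (-c) := by
    intro c hc
    rw [hfix 0 c, max_eq_right hc, max_eq_left (by linarith : (0:ℝ) ≤ -c)]
    simp
  have hU1 : U (0, -1) = ΦF := by
    rw [hneg (-1) (by norm_num), neg_neg, hq1]
  have hpos : ∀ c, 0 ≤ c → U (c, c) = U (c, c - 1) - ΦF := by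
    intro c hc
    rw [hfix c c, max_eq_left hc, max_eq_right (by linarith : -c ≤ 0), hU1, hq0]
    simp
  obtain ⟨p, hp, hp0, hp1⟩ := exists_p K hK L hL U hU M hMc g hgc G hG
  have hW := W_deriv K hK U hU M hMc hode ΦF q g p hq hMU hneg hpos hp0 (fun c hc => by
    rw [hp1 c hc]; linarith)
  refine ⟨fun s c => U (s, c), fun s c => -p c * Hf K U M (max c 0) 0 c c * Hf K U M 0 s c c, M,
    hU, ?_, hMc, hMU, fun s c => hode c s, ?_, hneg, hpos⟩
  · have h1 : Continuous (fun z : ℝ × ℝ => Hf K U M (max z.2 0) 0 z.2 z.2) :=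
      Hf_cont K hK U hU M hMc _ _ _ _ (by fun_prop) (by fun_prop) (by fun_prop) (by fun_prop)
    have h2 : Continuous (fun z : ℝ × ℝ => Hf K U M 0 z.1 z.2 z.2) :=
      Hf_cont K hK U hU M hMc _ _ _ _ (by fun_prop) (by fun_prop) (by fun_prop) (by fun_prop)
    unfold Function.uncurry
    fun_prop
  · intro s c
    have h1 := (hW c).sub_const (U (0, c))
    have hcont : Continuous (fun x => Hf K U M 0 s c x) :=
      Hf_cont K hK U hU M hMc _ _ _ _ (by fun_prop) (by fun_prop) (by fun_prop) (by fun_prop)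
    have h2 := (hasDerivAt_mul_vanish h1 (by simp) hcont.continuousAt).const_add (U (s, c))
    refine hda_congr h2 (fun x => ?_) rfl
    have := ratio K hK U hU M hMc hode 0 s c x
    linarith

theorem exists_sol (K : ℝ → ℝ) (hK : ContDiff ℝ 1 K) (L : ℝ) (hL : ∀ x, |deriv K x| ≤ L)
    (ΦF : ℝ) (Qinit : ℝ → ℝ) (hreg : ContDiffOn ℝ 1 Qinit (Icc 0 1)) (h0 : Qinit 0 = 0)
    (h1 : Qinit 1 = ΦF)
    (hcomp : derivWithin Qinit (Icc 0 1) 1 - derivWithin Qinit (Icc 0 1) 0 = K ΦF - K 0) :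
    ∃ (Q : ℝ → ℝ → ℝ) (N : ℝ → ℝ), IsRelaxedSol K ΦF ⊤ Qinit Q N := by
  obtain ⟨q, g, G, hgc, hq, hqQ, hg0, hg1, hG, hqG⟩ := init_ext Qinit hreg h0
  obtain ⟨U, Uc, M, hU, hUc, hM, hMU, hs, hc, hneg, hpos⟩ := exists_flow K hK L hL ΦF q g G hgc hq
    hG hqG (by rw [hqQ 0 (by simp), h0]) (by rw [hqQ 1 (by simp), h1]) (by rw [hg0, hg1, hcomp])
  have hKc := hK.continuous
  have hU' : Continuous (fun p : ℝ × ℝ => U p.1 p.2) := hU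
  have hUc' : Continuous (fun p : ℝ × ℝ => Uc p.1 p.2) := hUc
  obtain ⟨hCD, hF⟩ := contDiff_of_partials U (fun s c => K (U s c + M s)) Uc hs hc
    (by unfold Function.uncurry; fun_prop) hUc
  -- the trace along shifted diagonals
  have hdiag : ∀ b t : ℝ, HasDerivAt (fun s => U s (s - b)) (K (U t (t - b) + M t) + Uc t (t - b)) t := by
    intro b t
    have e : HasDerivAt (fun s : ℝ => (s, s - b)) ((1, 1) : ℝ × ℝ) t :=
      (hasDerivAt_id t).prodMk ((hasDerivAt_id t).sub_const b)
    have := (hF (t, t - b)).comp_hasDerivAt t e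
    refine hda_congr this (fun y => rfl) ?_
    simp
  have hspace : ∀ t b : ℝ, HasDerivAt (fun x => U t (t - x)) (-Uc t (t - b)) b := by
    intro t b
    have := (hc t (t - b)).comp b ((hasDerivAt_id b).const_sub t)
    exact hda_congr this (fun y => rfl) (by simp)
  set Mt : ℝ → ℝ := fun τ => ΦF - U τ (τ - 1) with hMt
  set N : ℝ → ℝ := fun τ => -(K (U τ (τ - 1) + M τ) + Uc τ (τ - 1)) with hN
  have hMtd : ∀ τ, HasDerivAt Mt (N τ) τ := fun τ => (hdiag 1 τ).const_sub ΦF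
  have hMt2 : ∀ τ, 0 ≤ τ → Mt τ = M τ := fun τ h => (hMU τ h).symm
  have hpe : ∀ τ, ∀ η ∈ Icc (0:ℝ) 1, pdEta (fun τ η => Mt τ + U τ (τ - η)) τ η = -Uc τ (τ - η) := by
    intro τ η hη
    exact ((hspace τ η).const_add (Mt τ)).hasDerivWithinAt.derivWithin
      (uniqueDiffOn_Icc zero_lt_one η hη)
  have hpt : ∀ τ, 0 ≤ τ → ∀ η, pdTau (fun τ η => Mt τ + U τ (τ - η)) τ η
      = N τ + (K (U τ (τ - η) + M τ) + Uc τ (τ - η)) := by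
    intro τ hτ η
    exact ((hMtd τ).add (hdiag η τ)).hasDerivWithinAt.derivWithin (uniqueDiffOn_Ici 0 τ hτ)
  refine ⟨fun τ η => Mt τ + U τ (τ - η), N, hreg, h0, h1, ?_, ?_, ?_, ?_, ?_, ?_⟩
  · apply ContDiff.contDiffOn
    have c1 : ContDiff ℝ 1 (fun p : ℝ × ℝ => Function.uncurry U (p.1, p.1 - 1)) :=
      hCD.comp (by fun_prop)
    have c2 : ContDiff ℝ 1 (fun p : ℝ × ℝ => Function.uncurry U (p.1, p.1 - p.2)) :=
      hCD.comp (by fun_prop)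
    exact (contDiff_const.sub c1).add c2
  · apply Continuous.continuousOn
    rw [hN]
    have c1 : Continuous (fun p : ℝ => Function.uncurry U (p, p - 1)) :=
      hU.comp (by fun_prop)
    have c2 : Continuous (fun p : ℝ => Function.uncurry Uc (p, p - 1)) :=
      hUc.comp (by fun_prop)
    simp only [Function.uncurry] at c1 c2
    fun_prop
  · intro τ hτ η hη
    rw [mem_Ico0_top] at hτ
    rw [hpt τ hτ η, hpe τ η (Ioo_subset_Icc_self hη), hMt2 τ hτ, add_comm (M τ)]
    ring
  · intro τ hτ
    rw [mem_Ico0_top] at hτ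
    simp only [hMt, sub_zero]
    rw [hpos τ hτ]; ring
  · intro τ hτ
    rw [mem_Ico0_top] at hτ
    rw [hpe τ 1 (by simp)]
    simp only [hN]
    rw [hMU τ hτ, add_sub_cancel]
    ring
  · intro η hη
    have e := hneg (0 - η) (by linarith [hη.1])
    have e2 := hneg (0 - 1) (by norm_num)
    simp only [hMt]
    rw [e, e2]
    have : -(0 - η) = η := by ring
    have h3 : -((0:ℝ) - 1) = 1 := by ring
    rw [this, h3, hqQ η hη, hqQ 1 (by simp), h1]; ring

theorem int_exp_bound' (h : ℝ → ℝ) (J lam b s : ℝ) (hl : 0 < lam) (hJ : 0 ≤ J) (hbs : b ≤ s)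
    (hb : ∀ r ∈ Ioc b s, |h r| ≤ J * exp (lam * r)) :
    |∫ r in b..s, h r| ≤ J / lam * exp (lam * s) := by
  have h1 : ‖∫ r in b..s, h r‖ ≤ ∫ r in b..s, J * exp (lam * r) := by
    apply intervalIntegral.norm_integral_le_of_norm_le hbs
    · exact Eventually.of_forall fun r hr => hb r hr
    · apply Continuous.intervalIntegrable; fun_prop
  have h2 : ∫ r in b..s, J * exp (lam * r) = J / lam * exp (lam * s) - J / lam * exp (lam * b) := by
    refine intervalIntegral.integral_eq_sub_of_hasDerivAt (f := fun r => J / lam * exp (lam * r)) ?_ ?_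
    · intro t _
      have : HasDerivAt (fun r => lam * r) lam t := by simpa using (hasDerivAt_id t).const_mul lam
      have e : J * exp (lam * t) = J / lam * (exp (lam * t) * lam) := by field_simp
      rw [e]
      exact (this.exp).const_mul (J / lam)
    · apply Continuous.intervalIntegrable; fun_prop
  rw [Real.norm_eq_abs, h2] at h1
  have : 0 ≤ J / lam * exp (lam * b) := by positivity
  linarith

theorem Ico0_top_eq : Ico0 ⊤ = Ici (0:ℝ) := by
  ext τ; rw [mem_Ico0_top]; rfl

theorem sol_basic (K : ℝ → ℝ) (hKc : Continuous K)
    (ΦF : ℝ) (Qinit : ℝ → ℝ) (Q : ℝ → ℝ → ℝ) (N : ℝ → ℝ) (hs : IsRelaxedSol K ΦF ⊤ Qinit Q N) :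
    (∀ τ, 0 ≤ τ → HasDerivWithinAt (fun t => Q t 1) (K (Q τ 1) - K ΦF) (Ici 0) τ) ∧
    (∀ c r : ℝ, 0 < r → 0 < r - c → r - c < 1 →
      HasDerivAt (fun t => Q t (t - c)) (N r + K (Q r (r - c))) r) := by
  have hreg := hs.reg
  rw [Ico0_top_eq] at hreg
  set D : Set (ℝ × ℝ) := Ici (0:ℝ) ×ˢ Icc (0:ℝ) 1 with hD
  have huD : UniqueDiffOn ℝ D := (uniqueDiffOn_Ici 0).prod (uniqueDiffOn_Icc zero_lt_one)
  have hFc : ContinuousOn (fderivWithin ℝ (Function.uncurry Q) D) D :=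
    hreg.continuousOn_fderivWithin huD le_rfl
  have hF : ∀ p ∈ D, HasFDerivWithinAt (Function.uncurry Q) (fderivWithin ℝ (Function.uncurry Q) D p) D p :=
    fun p hp => ((hreg.differentiableOn one_ne_zero) p hp).hasFDerivWithinAt
  have h1 : ∀ τ, 0 ≤ τ → ∀ η ∈ Icc (0:ℝ) 1, HasDerivWithinAt (fun t => Q t η)
      (fderivWithin ℝ (Function.uncurry Q) D (τ, η) (1, 0)) (Ici 0) τ := by
    intro τ hτ η hη
    have e : HasDerivWithinAt (fun t : ℝ => (t, η)) ((1, 0) : ℝ × ℝ) (Ici 0) τ :=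
      (hasDerivWithinAt_id τ _).prodMk (hasDerivWithinAt_const _ _ _)
    exact (hF (τ, η) ⟨hτ, hη⟩).comp_hasDerivWithinAt τ e (fun t ht => mk_mem_prod ht hη)
  have h2 : ∀ τ, 0 ≤ τ → ∀ η ∈ Icc (0:ℝ) 1, HasDerivWithinAt (fun x => Q τ x)
      (fderivWithin ℝ (Function.uncurry Q) D (τ, η) (0, 1)) (Icc 0 1) η := by
    intro τ hτ η hη
    have e : HasDerivWithinAt (fun x : ℝ => (τ, x)) ((0, 1) : ℝ × ℝ) (Icc 0 1) η :=
      (hasDerivWithinAt_const _ _ _).prodMk (hasDerivWithinAt_id η _)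
    exact (hF (τ, η) ⟨hτ, hη⟩).comp_hasDerivWithinAt η e (fun t ht => mk_mem_prod (mem_Ici.2 hτ) ht)
  have p1 : ∀ τ, 0 ≤ τ → ∀ η ∈ Icc (0:ℝ) 1, pdTau Q τ η
      = fderivWithin ℝ (Function.uncurry Q) D (τ, η) (1, 0) := fun τ hτ η hη =>
    (h1 τ hτ η hη).derivWithin (uniqueDiffOn_Ici 0 τ hτ)
  have p2 : ∀ τ, 0 ≤ τ → ∀ η ∈ Icc (0:ℝ) 1, pdEta Q τ η
      = fderivWithin ℝ (Function.uncurry Q) D (τ, η) (0, 1) := fun τ hτ η hη =>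
    (h2 τ hτ η hη).derivWithin (uniqueDiffOn_Icc zero_lt_one η hη)
  have pde : ∀ τ, 0 ≤ τ → ∀ η ∈ Icc (0:ℝ) 1,
      fderivWithin ℝ (Function.uncurry Q) D (τ, η) (1, 0)
      + fderivWithin ℝ (Function.uncurry Q) D (τ, η) (0, 1) = N τ + K (Q τ η) := by
    intro τ hτ
    have hm : MapsTo (fun η : ℝ => (τ, η)) (Icc (0:ℝ) 1) D := fun η hη => ⟨hτ, hη⟩
    have hcη : ContinuousOn (fun η : ℝ => (τ, η)) (Icc (0:ℝ) 1) := by fun_prop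
    have hFη := hFc.comp hcη hm
    have hQη := hreg.continuousOn.comp hcη hm
    refine EqOn.of_subset_closure (s := Ioo (0:ℝ) 1)
      (f := fun η => fderivWithin ℝ (Function.uncurry Q) D (τ, η) (1, 0)
        + fderivWithin ℝ (Function.uncurry Q) D (τ, η) (0, 1))
      (g := fun η => N τ + K (Q τ η)) ?_ ?_ ?_ Ioo_subset_Icc_self ?_
    · intro η hη
      have := hs.pde τ ((mem_Ico0_top τ).2 hτ) η hη
      rw [p1 τ hτ η (Ioo_subset_Icc_self hη), p2 τ hτ η (Ioo_subset_Icc_self hη)] at this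
      exact this
    · exact (hFη.clm_apply continuousOn_const).add (hFη.clm_apply continuousOn_const)
    · exact continuousOn_const.add (hKc.comp_continuousOn hQη)
    · rw [closure_Ioo (by norm_num)]
  refine ⟨fun τ hτ => ?_, fun c r hr h3 h4 => ?_⟩
  · have e1 := pde τ hτ 1 (by simp)
    have e2 := hs.Ndef τ ((mem_Ico0_top τ).2 hτ)
    rw [p2 τ hτ 1 (by simp)] at e2
    have e3 : K (Q τ 1) - K ΦF = fderivWithin ℝ (Function.uncurry Q) D (τ, 1) (1, 0) := by linarith
    rw [e3]
    exact h1 τ hτ 1 (by simp)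
  · have hmem : D ∈ 𝓝 (r, r - c) := prod_mem_nhds (Ici_mem_nhds hr) (Icc_mem_nhds h3 h4)
    have hη : r - c ∈ Icc (0:ℝ) 1 := ⟨h3.le, h4.le⟩
    have hFr := (hF (r, r - c) ⟨hr.le, hη⟩).hasFDerivAt hmem
    have e : HasDerivAt (fun t : ℝ => (t, t - c)) ((1, 1) : ℝ × ℝ) r :=
      (hasDerivAt_id r).prodMk ((hasDerivAt_id r).sub_const c)
    refine hda_congr (hFr.comp_hasDerivAt r e) (fun y => rfl) ?_
    rw [← pde r hr.le (r - c) hη, ← map_add]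
    simp

theorem sol_one (K : ℝ → ℝ) (hKc : Continuous K) (L : ℝ) (hL0 : 0 ≤ L)
    (hLip : ∀ x y, |K x - K y| ≤ L * |x - y|)
    (ΦF : ℝ) (Qinit : ℝ → ℝ) (Q : ℝ → ℝ → ℝ) (N : ℝ → ℝ) (hs : IsRelaxedSol K ΦF ⊤ Qinit Q N)
    (τ : ℝ) (hτ : 0 ≤ τ) : Q τ 1 = ΦF := by
  have hd := (sol_basic K hKc ΦF Qinit Q N hs).1
  have hlip : ∀ _ : ℝ, LipschitzWith ⟨L, hL0⟩ (fun x => K x - K ΦF) := fun _ =>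
    LipschitzWith.of_dist_le_mul fun x y => by
      rw [Real.dist_eq, Real.dist_eq, sub_sub_sub_cancel_right]
      exact hLip x y
  refine ODE_solution_unique (v := fun _ x => K x - K ΦF) (f := fun t => Q t 1) (g := fun _ => ΦF)
    (a := 0) (b := τ) hlip ?_ ?_ continuousOn_const ?_ ?_ ⟨hτ, le_rfl⟩
  · exact fun t ht => ((hd t ht.1).continuousWithinAt).mono Icc_subset_Ici_self
  · exact fun t ht => (hd t ht.1).mono (Ici_subset_Ici.2 ht.1)
  · intro t _
    simp only [sub_self]
    exact hasDerivWithinAt_const _ _ _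
  · change Q 0 1 = ΦF
    rw [hs.init 1 (by simp), hs.init1]

theorem sol_char (K : ℝ → ℝ) (hKc : Continuous K)
    (ΦF : ℝ) (Qinit : ℝ → ℝ) (Q : ℝ → ℝ → ℝ) (N : ℝ → ℝ) (hs : IsRelaxedSol K ΦF ⊤ Qinit Q N)
    (a s c : ℝ) (ha : 0 ≤ a) (has : a ≤ s) (hac : 0 ≤ a - c) (hsc : s - c ≤ 1) :
    IntervalIntegrable N volume a s ∧ IntervalIntegrable (fun r => K (Q r (r - c))) volume a s ∧
    Q s (s - c) - Q a (a - c) = (∫ r in a..s, N r) + ∫ r in a..s, K (Q r (r - c)) := by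
  have hreg := hs.reg.continuousOn
  have hN := hs.Ncont
  rw [Ico0_top_eq] at hreg hN
  have hm : MapsTo (fun r : ℝ => (r, r - c)) (Icc a s) (Ici (0:ℝ) ×ˢ Icc (0:ℝ) 1) := fun r hr =>
    ⟨ha.trans hr.1, by have := hr.1; linarith, by have := hr.2; linarith⟩
  have hQ : ContinuousOn (fun r => Q r (r - c)) (Icc a s) :=
    hreg.comp (f := fun r : ℝ => (r, r - c)) (by fun_prop) hm
  have i1 : IntervalIntegrable N volume a s := by
    apply ContinuousOn.intervalIntegrable
    rw [uIcc_of_le has]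
    exact hN.mono fun r hr => ha.trans hr.1
  have i2 : IntervalIntegrable (fun r => K (Q r (r - c))) volume a s := by
    apply ContinuousOn.intervalIntegrable
    rw [uIcc_of_le has]
    exact hKc.comp_continuousOn hQ
  refine ⟨i1, i2, ?_⟩
  rw [← intervalIntegral.integral_add i1 i2]
  symm
  exact intervalIntegral.integral_eq_sub_of_hasDerivAt_of_le (f := fun r => Q r (r - c)) has hQ
    (fun r hr => (sol_basic K hKc ΦF Qinit Q N hs).2 c r (ha.trans_lt hr.1)
      (by have := hr.1; linarith) (by have := hr.2; linarith)) (i1.add i2)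

theorem sol_unique (K : ℝ → ℝ) (hKc : Continuous K) (L : ℝ) (hL0 : 0 ≤ L)
    (hLip : ∀ x y, |K x - K y| ≤ L * |x - y|)
    (ΦF : ℝ) (Qinit : ℝ → ℝ) (Q1 : ℝ → ℝ → ℝ) (N1 : ℝ → ℝ) (hs1 : IsRelaxedSol K ΦF ⊤ Qinit Q1 N1)
    (Q2 : ℝ → ℝ → ℝ) (N2 : ℝ → ℝ) (hs2 : IsRelaxedSol K ΦF ⊤ Qinit Q2 N2) (T : ℝ) (hT : 0 ≤ T) :
    ∀ η ∈ Icc (0:ℝ) 1, Q1 T η = Q2 T η := by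
  set lam := 5 * L + 1 with hlam
  have hl : 0 < lam := by positivity
  set m : ℝ → ℝ := fun τ => ∫ r in (0:ℝ)..τ, (N1 r - N2 r) with hm
  have hNc : ContinuousOn (fun r => N1 r - N2 r) (Ici 0) := by
    have := hs1.Ncont.sub hs2.Ncont
    rwa [Ico0_top_eq] at this
  have hNi : ∀ a s : ℝ, 0 ≤ a → 0 ≤ s → IntervalIntegrable (fun r => N1 r - N2 r) volume a s := by
    intro a s ha hs
    exact (hNc.mono fun r hr => (le_min ha hs).trans hr.1).intervalIntegrable
  have hm0 : m 0 = 0 := by simp [hm]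
  -- characteristic identity for the difference
  have hchar : ∀ a s c : ℝ, 0 ≤ a → a ≤ s → 0 ≤ a - c → s - c ≤ 1 →
      (Q1 s (s - c) - Q2 s (s - c)) - (Q1 a (a - c) - Q2 a (a - c)) = (m s - m a)
        + ∫ r in a..s, (K (Q1 r (r - c)) - K (Q2 r (r - c))) := by
    intro a s c ha has hac hsc
    obtain ⟨i1, j1, e1⟩ := sol_char K hKc ΦF Qinit Q1 N1 hs1 a s c ha has hac hsc
    obtain ⟨i2, j2, e2⟩ := sol_char K hKc ΦF Qinit Q2 N2 hs2 a s c ha has hac hsc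
    have e3 : m s - m a = ∫ r in a..s, (N1 r - N2 r) := by
      simp only [hm]
      rw [intervalIntegral.integral_interval_sub_left (hNi 0 s le_rfl (ha.trans has))
        (hNi 0 a le_rfl ha)]
    rw [e3, intervalIntegral.integral_sub i1 i2, intervalIntegral.integral_sub j1 j2]
    linarith
  -- start of the characteristic
  have hstart : ∀ c : ℝ, -1 ≤ c → Q1 (max c 0) (max c 0 - c) - Q2 (max c 0) (max c 0 - c) = 0 := by
    intro c hc
    rcases le_total c 0 with h | h
    · have hmem : 0 - c ∈ Icc (0:ℝ) 1 := ⟨by linarith, by linarith⟩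
      rw [max_eq_right h, hs1.init _ hmem, hs2.init _ hmem, sub_self]
    · rw [max_eq_left h, sub_self, hs1.bc c ((mem_Ico0_top c).2 h), hs2.bc c ((mem_Ico0_top c).2 h),
        sub_self]
  -- maxima
  have hQc : ContinuousOn (fun p : ℝ × ℝ => exp (-(lam * p.1)) * |Q1 p.1 p.2 - Q2 p.1 p.2|)
      (Icc 0 T ×ˢ Icc (0:ℝ) 1) := by
    have c1 := hs1.reg.continuousOn
    have c2 := hs2.reg.continuousOn
    rw [Ico0_top_eq] at c1 c2
    have hsub : Icc 0 T ×ˢ Icc (0:ℝ) 1 ⊆ Ici (0:ℝ) ×ˢ Icc (0:ℝ) 1 :=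
      prod_mono Icc_subset_Ici_self le_rfl
    exact ContinuousOn.mul (by fun_prop) ((c1.mono hsub).sub (c2.mono hsub)).abs
  have hmc : ContinuousOn (fun τ => exp (-(lam * τ)) * |m τ|) (Icc 0 T) := by
    have : ContinuousOn m (Icc 0 T) := by
      have := intervalIntegral.continuousOn_primitive_interval' (hNi 0 T le_rfl hT) left_mem_uIcc
      rwa [uIcc_of_le hT] at this
    exact ContinuousOn.mul (by fun_prop) this.abs
  obtain ⟨⟨τB, ηB⟩, hBmem, hBmax⟩ := (isCompact_Icc.prod isCompact_Icc).exists_isMaxOn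
    ⟨((0:ℝ), (0:ℝ)), ⟨le_rfl, hT⟩, by simp⟩ hQc
  obtain ⟨τA, hAmem, hAmax⟩ := isCompact_Icc.exists_isMaxOn ⟨(0:ℝ), ⟨le_rfl, hT⟩⟩ hmc
  set B := exp (-(lam * τB)) * |Q1 τB ηB - Q2 τB ηB| with hB
  set A := exp (-(lam * τA)) * |m τA| with hA
  have hB0 : 0 ≤ B := by positivity
  have hA0 : 0 ≤ A := by positivity
  have hBle : ∀ τ ∈ Icc 0 T, ∀ η ∈ Icc (0:ℝ) 1, |Q1 τ η - Q2 τ η| ≤ B * exp (lam * τ) := by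
    intro τ hτ η hη
    have h1 : exp (-(lam * τ)) * |Q1 τ η - Q2 τ η| ≤ B := hBmax (show (τ, η) ∈ _ from ⟨hτ, hη⟩)
    rw [exp_neg, inv_mul_eq_div, div_le_iff₀ (exp_pos _)] at h1
    exact h1
  have hAle : ∀ τ ∈ Icc 0 T, |m τ| ≤ A * exp (lam * τ) := by
    intro τ hτ
    have h1 : exp (-(lam * τ)) * |m τ| ≤ A := hAmax hτ
    rw [exp_neg, inv_mul_eq_div, div_le_iff₀ (exp_pos _)] at h1
    exact h1
  have hint : ∀ a s c : ℝ, 0 ≤ a → a ≤ s → s ≤ T → 0 ≤ a - c → s - c ≤ 1 →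
      |∫ r in a..s, (K (Q1 r (r - c)) - K (Q2 r (r - c)))| ≤ L * B / lam * exp (lam * s) := by
    intro a s c ha has hsT hac hsc
    apply int_exp_bound' _ _ _ _ _ hl (by positivity) has
    intro r hr
    have h1 := hBle r ⟨ha.trans hr.1.le, hr.2.trans hsT⟩ (r - c)
      ⟨by have := hr.1; linarith, by have := hr.2; linarith⟩
    calc _ ≤ _ := hLip _ _
      _ ≤ L * (B * exp (lam * r)) := mul_le_mul_of_nonneg_left h1 hL0
      _ = _ := by ring
  have hexp : exp (-lam) ≤ 1 / 2 := by
    rw [exp_neg, one_div]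
    apply inv_anti₀ (by norm_num)
    have := add_one_le_exp lam
    linarith
  -- estimate for m
  have hmest : ∀ τ ∈ Icc 0 T, |m τ| ≤ (A / 2 + L * B / lam) * exp (lam * τ) := by
    intro τ hτ
    have e := hchar (max (τ - 1) 0) τ (τ - 1) (le_max_right _ _) (max_le (by linarith) hτ.1)
      (by linarith [le_max_left (τ - 1) 0]) (by linarith)
    have i := hint (max (τ - 1) 0) τ (τ - 1) (le_max_right _ _) (max_le (by linarith) hτ.1) hτ.2
      (by linarith [le_max_left (τ - 1) 0]) (by linarith)
    rw [hstart (τ - 1) (by linarith [hτ.1]), sub_sub_cancel,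
      sol_one K hKc L hL0 hLip ΦF Qinit Q1 N1 hs1 τ hτ.1,
      sol_one K hKc L hL0 hLip ΦF Qinit Q2 N2 hs2 τ hτ.1] at e
    have hma : |m (max (τ - 1) 0)| ≤ A / 2 * exp (lam * τ) := by
      rcases le_total (τ - 1) 0 with h | h
      · rw [max_eq_right h, hm0, abs_zero]; positivity
      · rw [max_eq_left h]
        refine (hAle (τ - 1) ⟨h, by linarith [hτ.2]⟩).trans ?_
        have e2 : exp (lam * (τ - 1)) = exp (lam * τ) * exp (-lam) := by
          rw [← exp_add]; congr 1; ring
        rw [e2]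
        have := mul_le_mul_of_nonneg_left hexp (by positivity : 0 ≤ A * exp (lam * τ))
        linarith
    set I := ∫ r in (max (τ - 1) 0)..τ, (K (Q1 r (r - (τ - 1))) - K (Q2 r (r - (τ - 1)))) with hI
    have e4 : m τ = m (max (τ - 1) 0) - I := by linarith
    rw [e4]
    have := abs_sub (m (max (τ - 1) 0)) I
    linarith
  have hQest : ∀ τ ∈ Icc 0 T, ∀ η ∈ Icc (0:ℝ) 1,
      |Q1 τ η - Q2 τ η| ≤ (2 * A + L * B / lam) * exp (lam * τ) := by
    intro τ hτ η hη
    have hmx : max (τ - η) 0 ≤ τ := max_le (by linarith [hη.1]) hτ.1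
    have e := hchar (max (τ - η) 0) τ (τ - η) (le_max_right _ _) hmx
      (by linarith [le_max_left (τ - η) 0]) (by linarith [hη.2])
    have i := hint (max (τ - η) 0) τ (τ - η) (le_max_right _ _) hmx hτ.2
      (by linarith [le_max_left (τ - η) 0]) (by linarith [hη.2])
    rw [hstart (τ - η) (by linarith [hτ.1, hη.2]), sub_sub_cancel, sub_zero] at e
    have h1 := hAle τ hτ
    have h2 := hAle (max (τ - η) 0) ⟨le_max_right _ _, hmx.trans hτ.2⟩
    have h3 : A * exp (lam * max (τ - η) 0) ≤ A * exp (lam * τ) := by gcongr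
    rw [e]
    set I := ∫ r in (max (τ - η) 0)..τ, (K (Q1 r (r - (τ - η))) - K (Q2 r (r - (τ - η)))) with hI
    have h4 := abs_add_le (m τ - m (max (τ - η) 0)) I
    have h5 := abs_sub (m τ) (m (max (τ - η) 0))
    linarith
  have hA1 : A ≤ A / 2 + L * B / lam := by
    have := hmest τA hAmem
    rw [← div_le_iff₀ (exp_pos _), ← inv_mul_eq_div, ← exp_neg] at this
    exact this
  have hB1 : B ≤ 2 * A + L * B / lam := by
    have := hQest τB hBmem.1 ηB hBmem.2
    rw [← div_le_iff₀ (exp_pos _), ← inv_mul_eq_div, ← exp_neg] at this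
    exact this
  have hB2 : B ≤ 0 := by
    have h1 : B ≤ 5 * (L * B / lam) := by linarith
    have h2 : 5 * (L * B / lam) = 5 * L * B / lam := by ring
    rw [h2, le_div_iff₀ hl] at h1
    rw [hlam] at h1
    linarith
  intro η hη
  have h1 := hBle T ⟨hT, le_rfl⟩ η hη
  have h2 : B = 0 := le_antisymm hB2 hB0
  rw [h2, zero_mul] at h1
  exact sub_eq_zero.1 (abs_nonpos_iff.1 h1)

/-- Theorem 3.5: global well-posedness of the relaxed system. -/
theorem stmt5 (ΦF : ℝ) (hΦF : 0 < ΦF) (K : ℝ → ℝ) (hK : KAssump K ΦF)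
    (Qinit : ℝ → ℝ) (hA2 : A2 K ΦF Qinit) :
    ∃ (Q : ℝ → ℝ → ℝ) (Ntil : ℝ → ℝ),
      IsRelaxedSol K ΦF ⊤ Qinit Q Ntil ∧
      ∀ (Q' : ℝ → ℝ → ℝ) (Ntil' : ℝ → ℝ), IsRelaxedSol K ΦF ⊤ Qinit Q' Ntil' →
        (∀ τ : ℝ, 0 ≤ τ → ∀ η ∈ Icc (0 : ℝ) 1, Q' τ η = Q τ η) ∧
        (∀ τ : ℝ, 0 ≤ τ → Ntil' τ = Ntil τ) := by
  obtain ⟨L, hL⟩ := hK.bdd1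
  have hK1 : ContDiff ℝ 1 K := hK.smooth.of_le (by norm_num)
  have hL0 : 0 ≤ L := (abs_nonneg _).trans (hL 0)
  obtain ⟨Q, N, hs⟩ := exists_sol K hK1 L hL ΦF Qinit hA2.reg hA2.init0 hA2.init1 hA2.compat
  refine ⟨Q, N, hs, fun Q' N' hs' => ?_⟩
  have hu : ∀ τ : ℝ, 0 ≤ τ → ∀ η ∈ Icc (0 : ℝ) 1, Q' τ η = Q τ η := fun τ hτ =>
    sol_unique K hK1.continuous L hL0 (lip_of_bdd K (hK1.differentiable one_ne_zero) L hL) ΦF Qinit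
      Q' N' hs' Q N hs τ hτ
  refine ⟨hu, fun τ hτ => ?_⟩
  rw [hs'.Ndef τ ((mem_Ico0_top τ).2 hτ), hs.Ndef τ ((mem_Ico0_top τ).2 hτ)]
  have : pdEta Q' τ 1 = pdEta Q τ 1 :=
    derivWithin_congr (fun η hη => hu τ hτ η hη) (hu τ hτ 1 (by simp))
  rw [this]
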